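/- There exist absolute constants C2, C3 > 0 such that for every finite irreducible reversible Markov chain (Ω,P,π), every probability measure μ on Ω, every 0 < α ≤ 1/2 and every real t ≥ 1: d_ave(φ_{α,C3}(t), μ) ≤ d_c(t, μ) + 2·C2 · t^{−α}. Moreover the same inequality holds with the worst-case distances d_ave(φ_{α,C3}(t)) and d_c(t) in place of the μ-versions. -/

import Mathlib

open Matrix Filter Asymptotics

/-- `P` is a stochastic matrix. -/
def IsStochastic {Ω : Type*} [Fintype Ω] (P : Matrix Ω Ω ℝ) : Prop :=
  (∀ x y, 0 ≤ P x y) ∧ ∀ x, ∑ y, P x y = 1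

/-- `P` is irreducible. -/
def IsIrreducibleMatrix {Ω : Type*} [Fintype Ω] [DecidableEq Ω] (P : Matrix Ω Ω ℝ) : Prop :=
  ∀ x y, ∃ n : ℕ, 0 < (P ^ n) x y

/-- `μ` is a probability vector. -/
def IsProbVec {Ω : Type*} [Fintype Ω] (μ : Ω → ℝ) : Prop :=
  (∀ x, 0 ≤ μ x) ∧ ∑ x, μ x = 1

/-- The chain `(P, pi)` is reversible. -/
def IsReversible {Ω : Type*} [Fintype Ω] (P : Matrix Ω Ω ℝ) (pi : Ω → ℝ) : Prop :=
  ∀ x y, pi x * P x y = pi y * P y x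

/-- A finite irreducible Markov chain `P` with stationary distribution `pi`. -/
def IsMC {Ω : Type*} [Fintype Ω] [DecidableEq Ω] (P : Matrix Ω Ω ℝ) (pi : Ω → ℝ) : Prop :=
  IsStochastic P ∧ IsIrreducibleMatrix P ∧ IsProbVec pi ∧ pi ᵥ* P = pi

/-- A finite irreducible reversible Markov chain `P` with stationary distribution `pi`. -/
def IsRevMC {Ω : Type*} [Fintype Ω] [DecidableEq Ω] (P : Matrix Ω Ω ℝ) (pi : Ω → ℝ) : Prop :=
  IsMC P pi ∧ IsReversible P pi

/-- Total-variation distance between two measures on a finite set. -/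
noncomputable def tvDist {Ω : Type*} [Fintype Ω] (μ ν : Ω → ℝ) : ℝ :=
  (∑ x, |μ x - ν x|) / 2

/-- The lazy version `(I + P)/2` of `P`. -/
noncomputable def lazyM {Ω : Type*} [Fintype Ω] [DecidableEq Ω] (P : Matrix Ω Ω ℝ) :
    Matrix Ω Ω ℝ :=
  (2 : ℝ)⁻¹ • (1 + P)

/-- `d_c(t, μ)`: TV distance from stationarity of the continuous-time chain at time `t`,
started from `μ`. -/
noncomputable def contDist {Ω : Type*} [Fintype Ω] [DecidableEq Ω] (P : Matrix Ω Ω ℝ) (pi : Ω → ℝ)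
    (t : ℝ) (μ : Ω → ℝ) : ℝ :=
  tvDist (fun y => ∑' k : ℕ, Real.exp (-t) * t ^ k / (Nat.factorial k) * (μ ᵥ* (P ^ k)) y) pi

/-- `d_L(t, μ)`: TV distance from stationarity of the lazy chain at (discrete) time `t`,
started from `μ`. -/
noncomputable def lazyDist {Ω : Type*} [Fintype Ω] [DecidableEq Ω] (P : Matrix Ω Ω ℝ)
    (pi : Ω → ℝ) (t : ℝ) (μ : Ω → ℝ) : ℝ :=
  tvDist (μ ᵥ* (lazyM P ^ ⌊t⌋₊)) pi

/-- `d_ave(t, μ)`: TV distance from stationarity of the averaged chain at (discrete) time `t`,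
started from `μ`. -/
noncomputable def aveDist {Ω : Type*} [Fintype Ω] [DecidableEq Ω] (P : Matrix Ω Ω ℝ) (pi : Ω → ℝ)
    (t : ℝ) (μ : Ω → ℝ) : ℝ :=
  tvDist (fun y => ((μ ᵥ* (P ^ ⌊t⌋₊)) y + (μ ᵥ* (P ^ (⌊t⌋₊ + 1))) y) / 2) pi

/-- The point mass at `x`. -/
noncomputable def deltaMass {Ω : Type*} [DecidableEq Ω] (x : Ω) : Ω → ℝ :=
  fun y => if y = x then 1 else 0

/-- Worst-case continuous-time distance `d_c(t)`. -/
noncomputable def contDistMax {Ω : Type*} [Fintype Ω] [DecidableEq Ω] (P : Matrix Ω Ω ℝ)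
    (pi : Ω → ℝ) (t : ℝ) : ℝ :=
  ⨆ x : Ω, contDist P pi t (deltaMass x)

/-- Worst-case lazy distance `d_L(t)`. -/
noncomputable def lazyDistMax {Ω : Type*} [Fintype Ω] [DecidableEq Ω] (P : Matrix Ω Ω ℝ)
    (pi : Ω → ℝ) (t : ℝ) : ℝ :=
  ⨆ x : Ω, lazyDist P pi t (deltaMass x)

/-- Worst-case averaged distance `d_ave(t)`. -/
noncomputable def aveDistMax {Ω : Type*} [Fintype Ω] [DecidableEq Ω] (P : Matrix Ω Ω ℝ)
    (pi : Ω → ℝ) (t : ℝ) : ℝ :=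
  ⨆ x : Ω, aveDist P pi t (deltaMass x)

/-- `φ_{α,C}(t) = t + ⌈C t^{(1+2α)/2} √(α log t)⌉`. -/
noncomputable def phiAC (α C t : ℝ) : ℝ :=
  t + ((⌈C * t ^ ((1 + 2 * α) / 2) * Real.sqrt (α * Real.log t)⌉ : ℤ) : ℝ)

/-- `ψ_{α,C}(x) = min (1, x + C |log(2x)|^{-α})`. -/
noncomputable def psiAC (α C x : ℝ) : ℝ :=
  min 1 (x + C * |Real.log (2 * x)| ^ (-α))

/-- `t_c(ε)`, the `ε`-mixing time of the continuous-time chain. -/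
noncomputable def contMix {Ω : Type*} [Fintype Ω] [DecidableEq Ω] (P : Matrix Ω Ω ℝ)
    (pi : Ω → ℝ) (ε : ℝ) : ℝ :=
  sInf {t : ℝ | 0 ≤ t ∧ contDistMax P pi t ≤ ε}

/-- `t_L(ε)`, the `ε`-mixing time of the lazy chain. -/
noncomputable def lazyMix {Ω : Type*} [Fintype Ω] [DecidableEq Ω] (P : Matrix Ω Ω ℝ)
    (pi : Ω → ℝ) (ε : ℝ) : ℕ :=
  sInf {t : ℕ | lazyDistMax P pi t ≤ ε}

/-- `t_ave(ε)`, the `ε`-mixing time of the averaged chain. -/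
noncomputable def aveMix {Ω : Type*} [Fintype Ω] [DecidableEq Ω] (P : Matrix Ω Ω ℝ)
    (pi : Ω → ℝ) (ε : ℝ) : ℕ :=
  sInf {t : ℕ | aveDistMax P pi t ≤ ε}

/-!
For reversible `P` and `‖f‖² = ∑ x, π x * f x ^ 2`, the sequence `a k = ‖P ^ k f‖²` has second
differences `‖P ^ k f - P ^ (k + 2) f‖²` by self-adjointness, and by contractivity both `a` and its
second differences are antitone, so `‖P ^ n f - P ^ (n + 2) f‖ ≤ √2 ‖f‖ / (n + 1)`. Hence the
averages `A m = (P ^ m + P ^ (m + 1)) / 2` satisfy `‖A (m + 1) f - A m f‖ ≤ ‖f‖ / (m + 1)`, and for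
`0 ≤ f ≤ 1` all `A m f` with `m` in a window `[a, b]` have a common lower bound `0 ≤ g ≤ 1` whose
`π`-mean is at least `π f - (b - a) / (a + 1)`.

Let `f` be the optimal test function for `d_ave(n, μ)`. The continuous-time chain makes a Poisson
number `k` of jumps by time `t`, which outside an event of probability `2 exp (-L)`, `L = α log t`,
lies in a window of half-width `w = 2 √(t L)` around `t`. When it does, `A (n - k) f ≥ g`, so
testing `μ H_t` against `g` gives `d_ave(n, μ) ≤ d_c(t, μ) + 2 w / (n - t - w) + 2 exp (-L)`. For
`L ≥ 1` the choice `n = ⌊φ(t)⌋` makes `n - t - w` at least `w t ^ α = w exp L`, and both errors are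
at most `2 t ^ (-α)`; for `L < 1` the claimed bound exceeds `1`.
-/

open MeasureTheory ProbabilityTheory

open scoped NNReal

section ConvexSequences

variable {R : Type*} [CommRing R] [LinearOrder R] [IsStrictOrderedRing R] {a : ℕ → R}

theorem succ_mul_sub_succ_le_of_antitone (h : Antitone fun k ↦ a k - a (k + 1)) (n : ℕ) :
    (n + 1) * (a n - a (n + 1)) ≤ a 0 - a (n + 1) :=
  calc (n + 1) * (a n - a (n + 1)) = ∑ _k ∈ Finset.range (n + 1), (a n - a (n + 1)) := by
        rw [Finset.sum_const, Finset.card_range, nsmul_eq_mul, Nat.cast_succ]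
    _ ≤ ∑ k ∈ Finset.range (n + 1), (a k - a (k + 1)) :=
        Finset.sum_le_sum fun k hk ↦ h (Nat.le_of_lt_succ (Finset.mem_range.1 hk))
    _ = a 0 - a (n + 1) := Finset.sum_range_sub' a (n + 1)

theorem second_difference_le_of_antitone (ha₀ : 0 ≤ a) (ha : Antitone a)
    (ha₂ : Antitone fun k ↦ a k - 2 * a (k + 1) + a (k + 2)) (n : ℕ) :
    (n + 1) * (n + 2) * (a n - 2 * a (n + 1) + a (n + 2)) ≤ 2 * a 0 := by
  induction n generalizing a with
  | zero =>
    have h₂ : a 2 ≤ a 1 := ha one_le_two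
    have h₁ : 0 ≤ a 1 := ha₀ 1
    push_cast
    linarith
  | succ n ih =>
    set Δ := a (n + 1) - 2 * a (n + 2) + a (n + 3)
    have hshift : (n + 1) * (n + 2) * Δ ≤ 2 * a 1 :=
      ih (a := fun k ↦ a (k + 1)) (fun k ↦ ha₀ (k + 1))
        (fun _ _ h ↦ ha (Nat.succ_le_succ h)) fun _ _ h ↦ ha₂ (Nat.succ_le_succ h)
    have hfirst : (n + 2) * Δ ≤ a 0 - a 1 := by
      have h := succ_mul_sub_succ_le_of_antitone (a := fun k ↦ a k - a (k + 1))
        (by convert ha₂ using 2; ring) (n + 1)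
      have hlast : 0 ≤ a (n + 2) - a (n + 3) := sub_nonneg.2 (ha (Nat.le_succ _))
      push_cast at h
      linear_combination h + hlast
    push_cast
    linear_combination hshift + 2 * hfirst

end ConvexSequences

theorem sub_sum_abs_le_of_mem_Icc {ι : Type*} {u : ℕ → ι → ℝ} {a b n : ℕ} (hn : n ∈ Set.Icc a b) :
    u a - ∑ i ∈ Finset.Ico a b, |u (i + 1) - u i| ≤ u n := by
  intro x
  have hdist : |u a x - u n x| ≤ ∑ i ∈ Finset.Ico a n, |u i x - u (i + 1) x| :=
    dist_le_Ico_sum_dist (fun i ↦ u i x) hn.1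
  have hsub : ∑ i ∈ Finset.Ico a n, |u i x - u (i + 1) x| ≤
      ∑ i ∈ Finset.Ico a b, |u i x - u (i + 1) x| :=
    Finset.sum_le_sum_of_subset_of_nonneg (Finset.Ico_subset_Ico le_rfl hn.2)
      fun _ _ _ ↦ abs_nonneg _
  simp only [Pi.sub_apply, Finset.sum_apply, Pi.abs_apply, abs_sub_comm (u (_ + 1) x)]
  linarith [le_abs_self (u a x - u n x)]

section Chain

variable {Ω : Type*} [Fintype Ω] {P : Matrix Ω Ω ℝ} {μ ν pi f g : Ω → ℝ}

section ProbVec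

theorem IsProbVec.dotProduct_one (hμ : IsProbVec μ) : μ ⬝ᵥ 1 = 1 := by
  rw [_root_.dotProduct_one, hμ.2]

theorem IsProbVec.dotProduct_mem_Icc (hμ : IsProbVec μ) (hf : f ∈ Set.Icc 0 1) :
    μ ⬝ᵥ f ∈ Set.Icc (0 : ℝ) 1 :=
  ⟨dotProduct_nonneg_of_nonneg hμ.1 hf.1,
    (dotProduct_le_dotProduct_of_nonneg_left hf.2 hμ.1).trans_eq hμ.dotProduct_one⟩

theorem IsProbVec.sq_dotProduct_le (hμ : IsProbVec μ) (f : Ω → ℝ) :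
    (μ ⬝ᵥ f) ^ 2 ≤ μ ⬝ᵥ f ^ 2 :=
  Real.pow_arith_mean_le_arith_mean_pow_of_even _ μ f (fun x _ ↦ hμ.1 x) hμ.2 even_two

theorem isProbVec_deltaMass [DecidableEq Ω] (x : Ω) : IsProbVec (deltaMass x) :=
  ⟨fun y ↦ by unfold deltaMass; split_ifs <;> norm_num, by simp [deltaMass]⟩

theorem IsProbVec.nonempty (hμ : IsProbVec μ) : Nonempty Ω := by
  by_contra hΩ
  rw [not_nonempty_iff] at hΩ
  simpa using hμ.2

end ProbVec

section TotalVariation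

theorem tvDist_nonneg (μ ν : Ω → ℝ) : 0 ≤ tvDist μ ν := by
  unfold tvDist
  positivity

theorem dotProduct_sub_dotProduct_le_tvDist (h : ∑ x, μ x = ∑ x, ν x) (hf : f ∈ Set.Icc 0 1) :
    ν ⬝ᵥ f - μ ⬝ᵥ f ≤ tvDist μ ν := by
  have hcenter : ν ⬝ᵥ f - μ ⬝ᵥ f = ∑ x, (f x - 1 / 2) * (ν x - μ x) := by
    simp only [dotProduct, sub_mul, mul_sub, Finset.sum_sub_distrib, ← Finset.mul_sum, h,
      mul_comm (f _)]
    ring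
  rw [hcenter, tvDist, Finset.sum_div]
  refine Finset.sum_le_sum fun x _ ↦ (le_abs_self _).trans ?_
  have hf₀ : 0 ≤ f x := hf.1 x
  have hf₁ : f x ≤ 1 := hf.2 x
  have hfx : |f x - 1 / 2| ≤ 1 / 2 := abs_le.2 ⟨by linarith, by linarith⟩
  rw [abs_mul, abs_sub_comm (μ x)]
  exact (mul_le_mul_of_nonneg_right hfx (abs_nonneg _)).trans_eq (one_div_mul_eq_div _ _)

theorem exists_tvDist_eq_dotProduct_sub (h : ∑ x, μ x = ∑ x, ν x) :
    ∃ f ∈ Set.Icc (0 : Ω → ℝ) 1, tvDist μ ν = ν ⬝ᵥ f - μ ⬝ᵥ f := by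
  refine ⟨fun x ↦ if μ x < ν x then 1 else 0,
    ⟨fun x ↦ by dsimp; split_ifs <;> norm_num, fun x ↦ by dsimp; split_ifs <;> norm_num⟩, ?_⟩
  have hsum : tvDist μ ν = ∑ x, (|μ x - ν x| + (ν x - μ x)) / 2 := by
    rw [tvDist, ← Finset.sum_div, Finset.sum_add_distrib, Finset.sum_sub_distrib, h]
    ring
  rw [hsum, ← sub_dotProduct]
  refine Finset.sum_congr rfl fun x _ ↦ ?_
  dsimp
  split_ifs with hx
  · rw [abs_of_neg (by linarith)]
    ring
  · rw [abs_of_nonneg (by linarith)]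
    ring

theorem IsProbVec.tvDist_le_one (hμ : IsProbVec μ) (hν : IsProbVec ν) : tvDist μ ν ≤ 1 := by
  obtain ⟨f, hf, hfμν⟩ := exists_tvDist_eq_dotProduct_sub (hμ.2.trans hν.2.symm)
  linarith [(hμ.dotProduct_mem_Icc hf).1, (hν.dotProduct_mem_Icc hf).2]

end TotalVariation

section Stochastic

theorem IsStochastic.isProbVec (hP : IsStochastic P) (x : Ω) : IsProbVec (P x) :=
  ⟨hP.1 x, hP.2 x⟩

theorem IsStochastic.mulVec_mem_Icc (hP : IsStochastic P) (hf : f ∈ Set.Icc 0 1) :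
    P *ᵥ f ∈ Set.Icc 0 1 :=
  ⟨fun x ↦ ((hP.isProbVec x).dotProduct_mem_Icc hf).1,
    fun x ↦ ((hP.isProbVec x).dotProduct_mem_Icc hf).2⟩

theorem IsStochastic.dotProduct_sq_mulVec_le (hP : IsStochastic P) (hpi : 0 ≤ pi)
    (hpiP : pi ᵥ* P = pi) (f : Ω → ℝ) : pi ⬝ᵥ (P *ᵥ f) ^ 2 ≤ pi ⬝ᵥ f ^ 2 :=
  calc pi ⬝ᵥ (P *ᵥ f) ^ 2 ≤ pi ⬝ᵥ (P *ᵥ f ^ 2) :=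
        dotProduct_le_dotProduct_of_nonneg_left
          (fun x ↦ (hP.isProbVec x).sq_dotProduct_le f) hpi
    _ = pi ⬝ᵥ f ^ 2 := by rw [dotProduct_mulVec, hpiP]

theorem IsProbVec.vecMul (hμ : IsProbVec μ) (hP : IsStochastic P) : IsProbVec (μ ᵥ* P) := by
  refine ⟨fun y ↦ Finset.sum_nonneg fun x _ ↦ mul_nonneg (hμ.1 x) (hP.1 x y), ?_⟩
  have hP₁ : P *ᵥ 1 = 1 := funext fun x ↦ (hP.isProbVec x).dotProduct_one
  rw [← _root_.dotProduct_one, ← dotProduct_mulVec, hP₁, hμ.dotProduct_one]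

variable [DecidableEq Ω]

theorem isStochastic_iff_mem_rowStochastic : IsStochastic P ↔ P ∈ rowStochastic ℝ Ω :=
  mem_rowStochastic_iff_sum.symm

theorem IsStochastic.pow (hP : IsStochastic P) (n : ℕ) : IsStochastic (P ^ n) :=
  isStochastic_iff_mem_rowStochastic.2 (pow_mem (isStochastic_iff_mem_rowStochastic.1 hP) n)

theorem vecMul_pow_eq_self (hpiP : pi ᵥ* P = pi) (n : ℕ) : pi ᵥ* P ^ n = pi := by
  induction n with
  | zero => simp
  | succ n ih => rw [pow_succ, ← vecMul_vecMul, ih, hpiP]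

end Stochastic

section Reversible

theorem IsReversible.vecMul_eq_self (hrev : IsReversible P pi) (hP : IsStochastic P) :
    pi ᵥ* P = pi := by
  ext y
  simp only [vecMul, dotProduct, hrev _ y, ← Finset.mul_sum, hP.2, mul_one]

theorem IsReversible.dotProduct_mul_mulVec (hrev : IsReversible P pi) (f g : Ω → ℝ) :
    pi ⬝ᵥ (f * P *ᵥ g) = pi ⬝ᵥ (P *ᵥ f * g) := by
  simp only [mulVec, dotProduct, Pi.mul_apply, Finset.mul_sum, Finset.sum_mul]
  rw [Finset.sum_comm]
  refine Finset.sum_congr rfl fun y _ ↦ Finset.sum_congr rfl fun x _ ↦ ?_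
  linear_combination (f x * g y) * hrev x y

theorem IsReversible.dotProduct_sq_sub_mulVec_mulVec (hrev : IsReversible P pi) (f : Ω → ℝ) :
    pi ⬝ᵥ (f - P *ᵥ P *ᵥ f) ^ 2 =
      pi ⬝ᵥ f ^ 2 - 2 * pi ⬝ᵥ (P *ᵥ f) ^ 2 + pi ⬝ᵥ (P *ᵥ P *ᵥ f) ^ 2 := by
  have hself : pi ⬝ᵥ (f * P *ᵥ P *ᵥ f) = pi ⬝ᵥ (P *ᵥ f) ^ 2 := by
    rw [hrev.dotProduct_mul_mulVec, sq]
  have hexpand : (f - P *ᵥ P *ᵥ f) ^ 2 =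
      f ^ 2 - (2 : ℝ) • (f * P *ᵥ P *ᵥ f) + (P *ᵥ P *ᵥ f) ^ 2 := by
    rw [ofNat_smul_eq_nsmul, nsmul_eq_mul]
    push_cast
    ring
  rw [hexpand, dotProduct_add, dotProduct_sub, dotProduct_smul, hself, smul_eq_mul]

theorem IsReversible.dotProduct_sq_pow_sub_pow_le [DecidableEq Ω] (hrev : IsReversible P pi)
    (hP : IsStochastic P) (hpi : 0 ≤ pi) (f : Ω → ℝ) (n : ℕ) :
    (n + 1) * (n + 2) * pi ⬝ᵥ (P ^ n *ᵥ f - P ^ (n + 2) *ᵥ f) ^ 2 ≤ 2 * pi ⬝ᵥ f ^ 2 := by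
  have hsucc (k : ℕ) : P ^ (k + 1) *ᵥ f = P *ᵥ P ^ k *ᵥ f := by rw [pow_succ', mulVec_mulVec]
  have hcontract := hP.dotProduct_sq_mulVec_le hpi (hrev.vecMul_eq_self hP)
  have hsecond (k : ℕ) : pi ⬝ᵥ (P ^ k *ᵥ f) ^ 2 - 2 * pi ⬝ᵥ (P ^ (k + 1) *ᵥ f) ^ 2 +
      pi ⬝ᵥ (P ^ (k + 2) *ᵥ f) ^ 2 = pi ⬝ᵥ (P ^ k *ᵥ f - P ^ (k + 2) *ᵥ f) ^ 2 := by
    simp only [hsucc, hrev.dotProduct_sq_sub_mulVec_mulVec]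
  have h := second_difference_le_of_antitone (a := fun k ↦ pi ⬝ᵥ (P ^ k *ᵥ f) ^ 2)
    (fun k ↦ dotProduct_nonneg_of_nonneg hpi fun x ↦ sq_nonneg _)
    (antitone_nat_of_succ_le fun k ↦ by simpa only [hsucc k] using hcontract _)
    (antitone_nat_of_succ_le fun k ↦ by
      simp only [hsecond]
      simpa only [hsucc, mulVec_sub] using hcontract (P ^ k *ᵥ f - P ^ (k + 2) *ᵥ f)) n
  simpa only [hsecond, pow_zero, one_mulVec] using h

end Reversible

section Averaged

variable [DecidableEq Ω]

/-- The `n`-step transition matrix `(P ^ n + P ^ (n + 1)) / 2` of the averaged chain, so that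
`d_ave(n, μ)` is the distance of `μ ᵥ* aveM P n` from stationarity. -/
noncomputable def aveM (P : Matrix Ω Ω ℝ) (n : ℕ) : Matrix Ω Ω ℝ :=
  (2 : ℝ)⁻¹ • (P ^ n + P ^ (n + 1))

theorem aveDist_eq_tvDist_vecMul_aveM (P : Matrix Ω Ω ℝ) (pi : Ω → ℝ) (t : ℝ) (μ : Ω → ℝ) :
    aveDist P pi t μ = tvDist (μ ᵥ* aveM P ⌊t⌋₊) pi := by
  simp only [aveDist, aveM, vecMul_smul, vecMul_add, tvDist, Pi.smul_apply, Pi.add_apply,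
    smul_eq_mul, div_eq_inv_mul]

theorem pow_mul_aveM (P : Matrix Ω Ω ℝ) (k n : ℕ) : P ^ k * aveM P n = aveM P (k + n) := by
  rw [aveM, aveM, mul_smul_comm, mul_add, ← pow_add, ← pow_add, add_assoc]

theorem aveM_succ_mulVec_sub (P : Matrix Ω Ω ℝ) (n : ℕ) (f : Ω → ℝ) :
    aveM P (n + 1) *ᵥ f - aveM P n *ᵥ f =
      -(2 : ℝ)⁻¹ • (P ^ n *ᵥ f - P ^ (n + 2) *ᵥ f) := by
  simp only [aveM, smul_mulVec, add_mulVec, add_assoc, Nat.reduceAdd]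
  module

theorem IsStochastic.aveM (hP : IsStochastic P) (n : ℕ) : IsStochastic (aveM P n) := by
  rw [_root_.aveM, smul_add]
  exact isStochastic_iff_mem_rowStochastic.2 <|
    convex_rowStochastic (isStochastic_iff_mem_rowStochastic.1 (hP.pow n))
      (isStochastic_iff_mem_rowStochastic.1 (hP.pow (n + 1))) (by norm_num) (by norm_num)
      (by norm_num)

theorem vecMul_aveM_eq_self (hpiP : pi ᵥ* P = pi) (n : ℕ) : pi ᵥ* aveM P n = pi := by
  rw [aveM, vecMul_smul, vecMul_add, vecMul_pow_eq_self hpiP, vecMul_pow_eq_self hpiP]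
  module

theorem IsReversible.dotProduct_abs_aveM_succ_sub_le (hrev : IsReversible P pi)
    (hP : IsStochastic P) (hpi : IsProbVec pi) (f : Ω → ℝ) (n : ℕ) :
    (n + 1) * pi ⬝ᵥ |aveM P (n + 1) *ᵥ f - aveM P n *ᵥ f| ≤ √(pi ⬝ᵥ f ^ 2) := by
  set d := P ^ n *ᵥ f - P ^ (n + 2) *ᵥ f
  have habs : |aveM P (n + 1) *ᵥ f - aveM P n *ᵥ f| = (2 : ℝ)⁻¹ • |d| := by
    rw [aveM_succ_mulVec_sub]
    ext x
    simp [abs_mul, d]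
  have hjensen : (pi ⬝ᵥ |d|) ^ 2 ≤ pi ⬝ᵥ d ^ 2 := by
    have hd : |d| ^ 2 = d ^ 2 := funext fun x ↦ sq_abs (d x)
    exact hd ▸ hpi.sq_dotProduct_le |d|
  have hsq : (n + 1) * (n + 2) * pi ⬝ᵥ d ^ 2 ≤ 2 * pi ⬝ᵥ f ^ 2 :=
    hrev.dotProduct_sq_pow_sub_pow_le hP hpi.1 f n
  have hmono : ((n : ℝ) + 1) * (n + 1) * (pi ⬝ᵥ |d|) ^ 2 ≤ (n + 1) * (n + 2) * pi ⬝ᵥ d ^ 2 := by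
    gcongr
    norm_num
  rw [habs, dotProduct_smul, smul_eq_mul]
  refine Real.le_sqrt_of_sq_le ?_
  linarith [sq_nonneg ((n + 1) * pi ⬝ᵥ |d|)]

theorem IsReversible.exists_forall_le_aveM_mulVec (hrev : IsReversible P pi)
    (hP : IsStochastic P) (hpi : IsProbVec pi) (hf : f ∈ Set.Icc 0 1) {a b : ℕ} (hab : a ≤ b) :
    ∃ g ∈ Set.Icc 0 1, (∀ n ∈ Set.Icc a b, g ≤ aveM P n *ᵥ f) ∧
      pi ⬝ᵥ f - (b - a) / (a + 1) ≤ pi ⬝ᵥ g := by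
  set u : ℕ → Ω → ℝ := fun n ↦ aveM P n *ᵥ f
  have hu (n : ℕ) : u n ∈ Set.Icc 0 1 := (hP.aveM n).mulVec_mem_Icc hf
  set v := ∑ i ∈ Finset.Ico a b, |u (i + 1) - u i|
  have hle : ∀ n ∈ Set.Icc a b, 0 ⊔ (u a - v) ≤ u n := fun n hn ↦
    sup_le (hu n).1 (sub_sum_abs_le_of_mem_Icc hn)
  refine ⟨0 ⊔ (u a - v), ⟨le_sup_left, (hle a ⟨le_rfl, hab⟩).trans (hu a).2⟩, hle, ?_⟩
  have hnorm : √(pi ⬝ᵥ f ^ 2) ≤ 1 :=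
    Real.sqrt_le_one.2 (hpi.dotProduct_mem_Icc
      ⟨fun x ↦ sq_nonneg _, fun x ↦ pow_le_one₀ (hf.1 x) (hf.2 x)⟩).2
  have hstep : ∀ i ∈ Finset.Ico a b, pi ⬝ᵥ |u (i + 1) - u i| ≤ 1 / ((a : ℝ) + 1) := by
    intro i hi
    have hai : (a : ℝ) ≤ i := mod_cast (Finset.mem_Ico.1 hi).1
    calc pi ⬝ᵥ |u (i + 1) - u i| ≤ 1 / ((i : ℝ) + 1) := by
          rw [le_div_iff₀' (by positivity)]
          exact (hrev.dotProduct_abs_aveM_succ_sub_le hP hpi f i).trans hnorm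
      _ ≤ 1 / (a + 1) := by gcongr
  calc pi ⬝ᵥ f - (b - a) / (a + 1) ≤ pi ⬝ᵥ f - pi ⬝ᵥ v := by
        rw [dotProduct_sum]
        have h := Finset.sum_le_card_nsmul _ _ _ hstep
        rw [Nat.card_Ico, nsmul_eq_mul, Nat.cast_sub hab, mul_one_div] at h
        linarith
    _ = pi ⬝ᵥ (u a - v) := by
        rw [dotProduct_sub, dotProduct_mulVec, vecMul_aveM_eq_self (hrev.vecMul_eq_self hP)]
    _ ≤ pi ⬝ᵥ (0 ⊔ (u a - v)) := dotProduct_le_dotProduct_of_nonneg_left le_sup_right hpi.1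

end Averaged

section RandomTime

variable [DecidableEq Ω] {ρ : Measure ℕ} [IsProbabilityMeasure ρ]

/-- The law at an independent random time of law `ρ` of the chain started from `μ`; for `ρ` Poisson
of mean `t` it is the law `μ H_t` of the continuous-time chain. -/
noncomputable def randomTimeLaw (P : Matrix Ω Ω ℝ) (μ : Ω → ℝ) (ρ : Measure ℕ) : Ω → ℝ :=
  fun y ↦ ∫ k, (μ ᵥ* P ^ k) y ∂ρ

theorem contDist_eq_tvDist_randomTimeLaw (P : Matrix Ω Ω ℝ) (pi : Ω → ℝ) (t : ℝ≥0) (μ : Ω → ℝ) :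
    contDist P pi t μ = tvDist (randomTimeLaw P μ (poissonMeasure t)) pi := by
  unfold contDist randomTimeLaw
  simp only [integral_poissonMeasure, smul_eq_mul]

theorem IsProbVec.integrable_vecMul_pow_apply (hμ : IsProbVec μ) (hP : IsStochastic P) (y : Ω) :
    Integrable (fun k ↦ (μ ᵥ* P ^ k) y) ρ := by
  refine .of_bound .of_discrete 1 (.of_forall fun k ↦ ?_)
  have hk := hμ.vecMul (hP.pow k)
  rw [Real.norm_of_nonneg (hk.1 y), ← hk.2]
  exact Finset.single_le_sum (fun x _ ↦ hk.1 x) (Finset.mem_univ y)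

theorem IsProbVec.randomTimeLaw_dotProduct (hμ : IsProbVec μ) (hP : IsStochastic P)
    (g : Ω → ℝ) : randomTimeLaw P μ ρ ⬝ᵥ g = ∫ k, (μ ᵥ* P ^ k) ⬝ᵥ g ∂ρ := by
  simp only [dotProduct, randomTimeLaw]
  rw [integral_finsetSum _ fun y _ ↦ (hμ.integrable_vecMul_pow_apply hP y).mul_const _]
  simp only [integral_mul_const]

theorem IsProbVec.sum_randomTimeLaw (hμ : IsProbVec μ) (hP : IsStochastic P) :
    ∑ y, randomTimeLaw P μ ρ y = 1 := by
  rw [← _root_.dotProduct_one, hμ.randomTimeLaw_dotProduct hP]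
  simp [(hμ.vecMul (hP.pow _)).dotProduct_one]

theorem IsProbVec.randomTimeLaw_dotProduct_le (hμ : IsProbVec μ) (hP : IsStochastic P)
    (hf : f ∈ Set.Icc 0 1) (hg : g ∈ Set.Icc 0 1) {k₀ k₁ n : ℕ} (hn : k₁ ≤ n)
    (hgf : ∀ m ∈ Set.Icc (n - k₁) (n - k₀), g ≤ aveM P m *ᵥ f) :
    randomTimeLaw P μ ρ ⬝ᵥ g ≤ (μ ᵥ* aveM P n) ⬝ᵥ f + ρ.real (Set.Icc k₀ k₁)ᶜ := by
  have hμk (k : ℕ) : IsProbVec (μ ᵥ* P ^ k) := hμ.vecMul (hP.pow k)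
  have hpointwise (k : ℕ) : (μ ᵥ* P ^ k) ⬝ᵥ g ≤
      (μ ᵥ* aveM P n) ⬝ᵥ f + (Set.Icc k₀ k₁)ᶜ.indicator 1 k := by
    by_cases hk : k ∈ Set.Icc k₀ k₁
    · have hkn : k + (n - k) = n := Nat.add_sub_cancel' (hk.2.trans hn)
      calc (μ ᵥ* P ^ k) ⬝ᵥ g ≤ (μ ᵥ* P ^ k) ⬝ᵥ (aveM P (n - k) *ᵥ f) :=
            dotProduct_le_dotProduct_of_nonneg_left
              (hgf _ ⟨Nat.sub_le_sub_left hk.2 n, Nat.sub_le_sub_left hk.1 n⟩) (hμk k).1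
        _ = (μ ᵥ* aveM P n) ⬝ᵥ f := by
            rw [dotProduct_mulVec, vecMul_vecMul, pow_mul_aveM, hkn]
        _ = _ := by simp [hk]
    · have hupper := ((hμk k).dotProduct_mem_Icc hg).2
      have hlower := ((hμ.vecMul (hP.aveM n)).dotProduct_mem_Icc hf).1
      simp only [Set.indicator_of_mem (Set.mem_compl hk), Pi.one_apply]
      linarith
  have hindicator : Integrable ((Set.Icc k₀ k₁)ᶜ.indicator (1 : ℕ → ℝ)) ρ :=
    (integrable_const 1).indicator .of_discrete
  have hintegrable : Integrable (fun k ↦ (μ ᵥ* P ^ k) ⬝ᵥ g) ρ :=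
    integrable_finsetSum _ fun y _ ↦ (hμ.integrable_vecMul_pow_apply hP y).mul_const _
  calc randomTimeLaw P μ ρ ⬝ᵥ g = ∫ k, (μ ᵥ* P ^ k) ⬝ᵥ g ∂ρ := hμ.randomTimeLaw_dotProduct hP g
    _ ≤ ∫ k, ((μ ᵥ* aveM P n) ⬝ᵥ f + (Set.Icc k₀ k₁)ᶜ.indicator 1 k) ∂ρ :=
        integral_mono hintegrable ((integrable_const _).add hindicator) hpointwise
    _ = (μ ᵥ* aveM P n) ⬝ᵥ f + ρ.real (Set.Icc k₀ k₁)ᶜ := by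
        rw [integral_add (integrable_const _) hindicator, integral_indicator_one .of_discrete]
        simp

theorem IsReversible.tvDist_vecMul_aveM_le (hrev : IsReversible P pi) (hP : IsStochastic P)
    (hpi : IsProbVec pi) (hμ : IsProbVec μ) {k₀ k₁ n : ℕ} (hk : k₀ ≤ k₁) (hn : k₁ ≤ n) :
    tvDist (μ ᵥ* aveM P n) pi ≤ tvDist (randomTimeLaw P μ ρ) pi +
      (k₁ - k₀) / (n - k₁ + 1) + ρ.real (Set.Icc k₀ k₁)ᶜ := by
  obtain ⟨f, hf, hfdist⟩ :=
    exists_tvDist_eq_dotProduct_sub ((hμ.vecMul (hP.aveM n)).2.trans hpi.2.symm)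
  obtain ⟨g, hg, hgf, hpig⟩ :=
    hrev.exists_forall_le_aveM_mulVec hP hpi hf (Nat.sub_le_sub_left hk n)
  have hwindow : ((n - k₀ : ℕ) : ℝ) - (n - k₁ : ℕ) = k₁ - k₀ := by
    rw [Nat.cast_sub hn, Nat.cast_sub (hk.trans hn)]
    ring
  rw [hwindow, Nat.cast_sub hn] at hpig
  have hlower : randomTimeLaw P μ ρ ⬝ᵥ g ≤ _ := hμ.randomTimeLaw_dotProduct_le hP hf hg hn hgf
  have hdual : pi ⬝ᵥ g - randomTimeLaw P μ ρ ⬝ᵥ g ≤ _ :=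
    dotProduct_sub_dotProduct_le_tvDist ((hμ.sum_randomTimeLaw hP).trans hpi.2.symm) hg
  linarith

end RandomTime

end Chain

section PoissonConcentration

variable {r : ℝ≥0}

theorem hasSum_poissonMeasure_exp_mul (r : ℝ≥0) (θ : ℝ) :
    HasSum (fun k : ℕ ↦ Real.exp (-r) * r ^ k / k.factorial * Real.exp (θ * k))
      (Real.exp (r * (Real.exp θ - 1))) := by
  have h := (NormedSpace.expSeries_div_hasSum_exp (r * Real.exp θ)).mul_left (Real.exp (-r))
  rw [← Real.exp_eq_exp_ℝ, ← Real.exp_add,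
    show -(r : ℝ) + r * Real.exp θ = r * (Real.exp θ - 1) by ring] at h
  refine h.congr_fun fun k ↦ ?_
  rw [mul_comm θ, Real.exp_nat_mul, mul_pow]
  ring

theorem integrable_exp_mul_poissonMeasure (r : ℝ≥0) (θ : ℝ) :
    Integrable (fun k : ℕ ↦ Real.exp (θ * k)) (poissonMeasure r) := by
  rw [integrable_poissonMeasure_iff]
  simpa using (hasSum_poissonMeasure_exp_mul r θ).summable

theorem mgf_poissonMeasure (r : ℝ≥0) (θ : ℝ) :
    mgf (fun k : ℕ ↦ (k : ℝ)) (poissonMeasure r) θ = Real.exp (r * (Real.exp θ - 1)) := by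
  rw [mgf, integral_poissonMeasure]
  exact (hasSum_poissonMeasure_exp_mul r θ).tsum_eq

theorem integrable_exp_mul_sub_poissonMeasure (r : ℝ≥0) (θ : ℝ) :
    Integrable (fun k : ℕ ↦ Real.exp (θ * (k - r))) (poissonMeasure r) := by
  simp only [mul_sub, Real.exp_sub]
  exact (integrable_exp_mul_poissonMeasure r θ).div_const _

theorem mgf_sub_poissonMeasure_le {θ : ℝ} (hθ : |θ| ≤ 1) :
    mgf (fun k : ℕ ↦ (k : ℝ) - r) (poissonMeasure r) θ ≤ Real.exp (r * θ ^ 2) := by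
  have hexp : Real.exp θ - 1 - θ ≤ θ ^ 2 := (abs_le.1 (Real.abs_exp_sub_one_sub_id_le hθ)).2
  simp only [sub_eq_add_neg (Nat.cast _)]
  rw [mgf_add_const, mgf_poissonMeasure, ← Real.exp_add, Real.exp_le_exp]
  linarith [mul_le_mul_of_nonneg_left hexp r.coe_nonneg]

theorem poissonMeasure_real_le_abs_sub_le {L : ℝ} (hL : 0 ≤ L) (hLr : L ≤ r) :
    (poissonMeasure r).real {k : ℕ | 2 * √(r * L) ≤ |(k : ℝ) - r|} ≤ 2 * Real.exp (-L) := by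
  set θ := √(L / r)
  set w := 2 * √(r * L)
  have hθ₀ : 0 ≤ θ := Real.sqrt_nonneg _
  have hθ₁ : |θ| ≤ 1 := by
    rw [abs_of_nonneg hθ₀, Real.sqrt_le_one]
    exact div_le_one_of_le₀ hLr r.2
  have hrL : r * (L / r) = L := mul_div_cancel_of_imp' fun hr ↦ le_antisymm (hr ▸ hLr) hL
  have hrθ : r * θ ^ 2 = L := by rw [Real.sq_sqrt (by positivity), hrL]
  have hθw : θ * w = 2 * L := by
    rw [mul_left_comm, ← Real.sqrt_mul (by positivity),
      show L / r * (r * L) = L ^ 2 by linear_combination L * hrL, Real.sqrt_sq hL]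
  have hchernoff {θ' : ℝ} (hθ' : |θ'| ≤ 1) (hsq : θ' ^ 2 = θ ^ 2) :
      Real.exp (-θ * w) * mgf (fun k : ℕ ↦ (k : ℝ) - r) (poissonMeasure r) θ' ≤
        Real.exp (-L) := by
    refine (mul_le_mul_of_nonneg_left (mgf_sub_poissonMeasure_le hθ')
      (Real.exp_pos _).le).trans_eq ?_
    rw [← Real.exp_add, hsq]
    congr 1
    linear_combination hrθ - hθw
  have hupper : (poissonMeasure r).real {k : ℕ | w ≤ (k : ℝ) - r} ≤ Real.exp (-L) :=
    (measure_ge_le_exp_mul_mgf w hθ₀ (integrable_exp_mul_sub_poissonMeasure r θ)).trans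
      (hchernoff hθ₁ rfl)
  have hlower : (poissonMeasure r).real {k : ℕ | (k : ℝ) - r ≤ -w} ≤ Real.exp (-L) :=
    (measure_le_le_exp_mul_mgf (-w) (neg_nonpos.2 hθ₀)
      (integrable_exp_mul_sub_poissonMeasure r (-θ))).trans <| by
        simpa using hchernoff ((abs_neg θ).trans_le hθ₁) (neg_sq θ)
  calc _ = (poissonMeasure r).real ({k : ℕ | w ≤ (k : ℝ) - r} ∪ {k : ℕ | (k : ℝ) - r ≤ -w}) := by
        congr 1
        ext k
        exact (le_abs' (b := (k : ℝ) - r)).trans or_comm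
    _ ≤ _ := measureReal_union_le _ _
    _ ≤ 2 * Real.exp (-L) := by linarith

theorem poissonMeasure_real_compl_Icc_le {L : ℝ} (hL : 0 ≤ L) (hLr : L ≤ r) :
    (poissonMeasure r).real (Set.Icc ⌈r - 2 * √(r * L)⌉₊ ⌊r + 2 * √(r * L)⌋₊)ᶜ ≤
      2 * Real.exp (-L) := by
  refine (measureReal_mono fun k hk ↦ ?_).trans (poissonMeasure_real_le_abs_sub_le hL hLr)
  rw [Set.mem_compl_iff, Set.mem_Icc, not_and_or, not_le, not_le, Nat.lt_ceil,
    Nat.floor_lt (by positivity)] at hk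
  rw [Set.mem_ofPred_eq, le_abs']
  exact hk.imp (fun h ↦ by linarith) fun h ↦ by linarith

end PoissonConcentration

section Comparison

theorem add_mul_le_phiAC {α C t : ℝ} (ht : 0 < t) :
    t + C * t ^ α * √(t * (α * Real.log t)) ≤ phiAC α C t := by
  have hpow : t ^ ((1 + 2 * α) / 2) = t ^ α * √t := by
    rw [Real.sqrt_eq_rpow, ← Real.rpow_add ht]
    ring_nf
  rw [phiAC, hpow, Real.sqrt_mul ht.le]
  gcongr
  exact (le_of_eq (by ring)).trans (Int.le_ceil _)

variable {Ω : Type*} [Fintype Ω] [DecidableEq Ω] {P : Matrix Ω Ω ℝ} {μ pi : Ω → ℝ}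

theorem IsReversible.tvDist_vecMul_aveM_le_contDist (hrev : IsReversible P pi)
    (hP : IsStochastic P) (hpi : IsProbVec pi) (hμ : IsProbVec μ) {t L : ℝ} (hL : 1 ≤ L)
    (hLt : L ≤ t) {n : ℕ} (hn : t + 2 * √(t * L) * (1 + Real.exp L) ≤ n) :
    tvDist (μ ᵥ* aveM P n) pi ≤ contDist P pi t μ + 4 * Real.exp (-L) := by
  lift t to ℝ≥0 using by linarith
  set w := 2 * √(t * L)
  have hw : 1 ≤ w := by
    have : 1 ≤ √(t * L) := Real.one_le_sqrt.2 (one_le_mul_of_one_le_of_one_le (hL.trans hLt) hL)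
    linarith
  set k₀ := ⌈t - w⌉₊
  set k₁ := ⌊t + w⌋₊
  have hk₀ : t - w ≤ k₀ := Nat.le_ceil _
  have hk₁ : k₁ ≤ t + w := Nat.floor_le (by positivity)
  have hk : k₀ ≤ k₁ := Nat.ceil_le.2 (by linarith [Nat.lt_floor_add_one (t + w)])
  have hgap : w * Real.exp L ≤ n - k₁ := by linarith
  have hgap_pos : 0 < w * Real.exp L := by positivity
  have hk₁n : k₁ ≤ n := by
    rw [← Nat.cast_le (α := ℝ)]
    linarith
  have hratio : (k₁ - k₀ : ℝ) / (n - k₁ + 1) ≤ 2 * Real.exp (-L) := by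
    rw [div_le_iff₀ (by linarith)]
    calc (k₁ - k₀ : ℝ) ≤ 2 * Real.exp (-L) * (w * Real.exp L) := by
          rw [Real.exp_neg]
          field_simp
          linarith
      _ ≤ 2 * Real.exp (-L) * (n - k₁ + 1) := by gcongr; exact hgap.trans (lt_add_one _).le
  have hcompare := hrev.tvDist_vecMul_aveM_le (ρ := poissonMeasure t) hP hpi hμ hk hk₁n
  have htail : (poissonMeasure t).real (Set.Icc k₀ k₁)ᶜ ≤ 2 * Real.exp (-L) :=
    poissonMeasure_real_compl_Icc_le (by linarith) hLt
  rw [contDist_eq_tvDist_randomTimeLaw]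
  linarith

theorem IsReversible.aveDist_phiAC_le_contDist (hrev : IsReversible P pi) (hP : IsStochastic P)
    (hpi : IsProbVec pi) (hμ : IsProbVec μ) {α t : ℝ} (hα : α ≤ Real.exp 1) (ht : 1 ≤ t) :
    aveDist P pi (phiAC α 4 t) μ ≤ contDist P pi t μ + 4 * t ^ (-α) := by
  have ht₀ : 0 < t := by linarith
  set L := α * Real.log t
  have hexp : t ^ α = Real.exp L := by rw [Real.rpow_def_of_pos ht₀, mul_comm]
  rw [Real.rpow_neg ht₀.le, hexp, ← Real.exp_neg, aveDist_eq_tvDist_vecMul_aveM]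
  rcases lt_or_ge L 1 with hL | hL
  · have hdist := (hμ.vecMul (hP.aveM ⌊phiAC α 4 t⌋₊)).tvDist_le_one hpi
    have hcont : 0 ≤ contDist P pi t μ := tvDist_nonneg _ _
    have hlarge : 1 ≤ 4 * Real.exp (-L) := by
      have : Real.exp L ≤ 4 := (Real.exp_le_exp.2 hL.le).trans (by linarith [Real.exp_one_lt_d9])
      rw [Real.exp_neg, ← div_eq_mul_inv, one_le_div (Real.exp_pos L)]
      exact this
    linarith
  · have hLt : L ≤ t :=
      calc L ≤ Real.exp 1 * Real.log t :=
          mul_le_mul_of_nonneg_right hα (Real.log_nonneg ht)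
        _ ≤ Real.exp (Real.log t) := Real.exp_one_mul_le_exp
        _ = t := Real.exp_log ht₀
    refine hrev.tvDist_vecMul_aveM_le_contDist hP hpi hμ hL hLt ?_
    have hphi := add_mul_le_phiAC (α := α) (C := 4) ht₀
    rw [hexp] at hphi
    have hfloor := Nat.lt_floor_add_one (phiAC α 4 t)
    have hsqrt : 1 ≤ √(t * L) := Real.one_le_sqrt.2 (one_le_mul_of_one_le_of_one_le ht hL)
    have hexpL : 2 ≤ Real.exp L := by linarith [Real.add_one_le_exp L]
    nlinarith

theorem ave_dist_le_cont_dist_general (hP : IsStochastic P) (hpi : IsProbVec pi)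
    (hrev : IsReversible P pi) {α t : ℝ} (hα : α ≤ Real.exp 1) (ht : 1 ≤ t) :
    (∀ μ : Ω → ℝ, IsProbVec μ →
      aveDist P pi (phiAC α 4 t) μ ≤ contDist P pi t μ + 4 * t ^ (-α)) ∧
    aveDistMax P pi (phiAC α 4 t) ≤ contDistMax P pi t + 4 * t ^ (-α) := by
  have hdist (μ : Ω → ℝ) (hμ : IsProbVec μ) := hrev.aveDist_phiAC_le_contDist hP hpi hμ hα ht
  have := hpi.nonempty
  refine ⟨hdist, ciSup_le fun x ↦ (hdist _ (isProbVec_deltaMass x)).trans ?_⟩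
  gcongr
  exact le_ciSup (f := fun x ↦ contDist P pi t (deltaMass x)) (Set.finite_range _).bddAbove x

end Comparison

/-- **Theorem 1 (eq. (3)) of Hermon–Peres.**
There are absolute constants `C₂, C₃ > 0` such that for every finite irreducible reversible
Markov chain, every initial distribution `μ`, every `0 < α ≤ 1/2` and every `t ≥ 1`,
`d_ave(φ_{α,C₃}(t), μ) ≤ d_c(t, μ) + 2 C₂ t^{-α}`, and the same holds for the worst-case
distances. -/
theorem ave_dist_le_cont_dist :
    ∃ C₂ C₃ : ℝ, 0 < C₂ ∧ 0 < C₃ ∧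
      ∀ (Ω : Type) [Fintype Ω] [DecidableEq Ω] [Nonempty Ω]
        (P : Matrix Ω Ω ℝ) (pi : Ω → ℝ), IsRevMC P pi →
        ∀ α t : ℝ, 0 < α → α ≤ 1 / 2 → 1 ≤ t →
          (∀ μ : Ω → ℝ, IsProbVec μ →
            aveDist P pi (phiAC α C₃ t) μ ≤ contDist P pi t μ + 2 * C₂ * t ^ (-α)) ∧
          aveDistMax P pi (phiAC α C₃ t) ≤ contDistMax P pi t + 2 * C₂ * t ^ (-α) := by
  refine ⟨2, 4, by norm_num, by norm_num, fun Ω _ _ _ P pi hrev α t _ hα ht ↦ ?_⟩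
  rw [show (2 : ℝ) * 2 = 4 by norm_num]
  exact ave_dist_le_cont_dist_general hrev.1.1 hrev.1.2.2.1 hrev.2
    (hα.trans (by linarith [Real.add_one_le_exp 1])) ht
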